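/- Let γ > 1 and B, S > 0 be real constants, and let ε > 0. If ρ satisfies ϱ_c < ρ ≤ ϱ_m and 𝔱(ρ) ≤ 𝔱_c − ε/2, then the derivative of the squared momentum satisfies 2ρ(2B − (γ+1)ρ^{γ−1}S) ≤ −ε/ρ. -/

import Mathlib

/-!
Write `𝔱` for the squared momentum and `ϱ_c` for the critical density. The Euler-type identity
`𝔱(ρ) - ρ 𝔱'(ρ) / 2 = (γ - 1) S ρ ^ (γ + 1)` exhibits its left-hand side as an increasing function
of `ρ`. Since `𝔱'(ϱ_c) = 0`, that function takes the value `𝔱(ϱ_c) = 𝔱_c` at `ϱ_c`, so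
`ρ 𝔱'(ρ) ≤ 2 (𝔱(ρ) - 𝔱_c)` for all `ρ ≥ ϱ_c`.
-/

/-- The squared momentum `𝔱(ρ)` of a flow of density `ρ`, with adiabatic exponent `γ`,
Bernoulli constant `B` and entropy constant `S`. -/
noncomputable def squaredMomentum (γ B S ρ : ℝ) : ℝ :=
  2 * ρ ^ 2 * (B - ρ ^ (γ - 1) * S)

/-- The critical density `ϱ_c`, at which the squared momentum is stationary. The formula is
meaningful for `γ ≠ 1` only: at `γ = 1` its exponent is the junk value `1 / 0 = 0`. -/
noncomputable def criticalDensity (γ B S : ℝ) : ℝ :=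
  (2 * B / ((γ + 1) * S)) ^ (1 / (γ - 1))

section

variable {γ B S ρ : ℝ}

theorem hasDerivAt_squaredMomentum (γ B S : ℝ) (hρ : ρ ≠ 0) :
    HasDerivAt (squaredMomentum γ B S) (2 * ρ * (2 * B - (γ + 1) * ρ ^ (γ - 1) * S)) ρ := by
  have hsq : HasDerivAt (fun x : ℝ ↦ 2 * x ^ 2) (2 * (2 * ρ)) ρ := by
    simpa using (hasDerivAt_pow 2 ρ).const_mul 2
  have hpow : HasDerivAt (fun x : ℝ ↦ B - x ^ (γ - 1) * S)
      (-((γ - 1) * ρ ^ (γ - 1 - 1) * S)) ρ :=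
    ((Real.hasDerivAt_rpow_const (Or.inl hρ)).mul_const S).const_sub B
  refine (hsq.mul hpow).congr_deriv ?_
  rw [Real.rpow_sub_one hρ (γ - 1)]
  field

theorem mul_deriv_squaredMomentum (γ B S : ℝ) (hρ : ρ ≠ 0) :
    ρ * deriv (squaredMomentum γ B S) ρ =
      2 * (squaredMomentum γ B S ρ - (γ - 1) * S * ρ ^ (γ + 1)) := by
  have hpow : ρ ^ (γ + 1) = ρ ^ (γ - 1) * ρ ^ 2 := by
    rw [← Real.rpow_add_natCast hρ]
    congr 1
    push_cast
    ring
  rw [(hasDerivAt_squaredMomentum γ B S hρ).deriv, hpow, squaredMomentum]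
  ring

theorem criticalDensity_pos (hγ : -1 < γ) (hB : 0 < B) (hS : 0 < S) :
    0 < criticalDensity γ B S := by
  have : 0 < γ + 1 := by linarith
  exact Real.rpow_pos_of_pos (by positivity) _

theorem criticalDensity_rpow (hγ : -1 < γ) (hB : 0 ≤ B) (hS : 0 ≤ S) (p : ℝ) :
    criticalDensity γ B S ^ p = (2 * B / ((γ + 1) * S)) ^ (p / (γ - 1)) := by
  have : 0 < γ + 1 := by linarith
  rw [criticalDensity, ← Real.rpow_mul (by positivity), one_div_mul_eq_div]

theorem deriv_squaredMomentum_criticalDensity (hγ : -1 < γ) (hγ₁ : γ ≠ 1) (hB : 0 < B)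
    (hS : 0 < S) : deriv (squaredMomentum γ B S) (criticalDensity γ B S) = 0 := by
  have hγ_add : γ + 1 ≠ 0 := by linarith
  rw [(hasDerivAt_squaredMomentum γ B S (criticalDensity_pos hγ hB hS).ne').deriv,
    criticalDensity_rpow hγ hB.le hS.le, div_self (sub_ne_zero.mpr hγ₁), Real.rpow_one]
  field

theorem squaredMomentum_criticalDensity (hγ : -1 < γ) (hγ₁ : γ ≠ 1) (hB : 0 < B) (hS : 0 < S) :
    squaredMomentum γ B S (criticalDensity γ B S) =
      (γ - 1) * S * criticalDensity γ B S ^ (γ + 1) := by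
  have h := mul_deriv_squaredMomentum γ B S (criticalDensity_pos hγ hB hS).ne'
  rw [deriv_squaredMomentum_criticalDensity hγ hγ₁ hB hS] at h
  linarith

theorem squaredMomentum_criticalDensity_eq_rpow_mul_rpow (hγ : -1 < γ) (hγ₁ : γ ≠ 1)
    (hB : 0 < B) (hS : 0 < S) :
    squaredMomentum γ B S (criticalDensity γ B S) =
      (γ - 1) * (2 * B / (γ + 1)) ^ ((γ + 1) / (γ - 1)) * S ^ (-2 / (γ - 1)) := by
  have hγ_add : 0 < γ + 1 := by linarith
  have hγ_sub : γ - 1 ≠ 0 := sub_ne_zero.mpr hγ₁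
  have hexp : -2 / (γ - 1) = 1 - (γ + 1) / (γ - 1) := by field
  rw [squaredMomentum_criticalDensity hγ hγ₁ hB hS, criticalDensity_rpow hγ hB.le hS.le,
    ← div_div, Real.div_rpow (by positivity) hS.le, hexp, Real.rpow_sub hS, Real.rpow_one]
  ring

theorem mul_deriv_squaredMomentum_le (hγ : 1 < γ) (hB : 0 < B) (hS : 0 < S)
    (hρ : criticalDensity γ B S ≤ ρ) :
    ρ * deriv (squaredMomentum γ B S) ρ ≤
      2 * (squaredMomentum γ B S ρ - squaredMomentum γ B S (criticalDensity γ B S)) := by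
  have hγ_neg : -1 < γ := by linarith
  have hc : 0 < criticalDensity γ B S := criticalDensity_pos hγ_neg hB hS
  have hpow : criticalDensity γ B S ^ (γ + 1) ≤ ρ ^ (γ + 1) :=
    Real.rpow_le_rpow hc.le hρ (by linarith)
  have hcoeff : 0 ≤ (γ - 1) * S := mul_nonneg (by linarith) hS.le
  rw [mul_deriv_squaredMomentum γ B S (hc.trans_le hρ).ne',
    squaredMomentum_criticalDensity hγ_neg hγ.ne' hB hS]
  linarith [mul_le_mul_of_nonneg_left hpow hcoeff]

theorem stmt_6_general {ε : ℝ} (hγ : 1 < γ) (hB : 0 < B) (hS : 0 < S)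
    (hρ : criticalDensity γ B S ≤ ρ)
    (ht : squaredMomentum γ B S ρ ≤
      squaredMomentum γ B S (criticalDensity γ B S) - ε / 2) :
    deriv (squaredMomentum γ B S) ρ ≤ -ε / ρ := by
  have hρ_pos : 0 < ρ := (criticalDensity_pos (by linarith) hB hS).trans_le hρ
  rw [le_div_iff₀' hρ_pos]
  linarith [mul_deriv_squaredMomentum_le hγ hB hS hρ]

end

/-- Let `γ > 1`, `B, S > 0` and `ε > 0`. If `ϱ_c < ρ ≤ ϱ_m` and
`𝔱(ρ) = 2ρ²(B - ρ^(γ-1)S) ≤ 𝔱_c - ε/2`, then the derivative of the squared momentum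
satisfies `2ρ(2B - (γ+1)ρ^(γ-1)S) ≤ -ε/ρ`. -/
theorem stmt_6 (γ B S ε ρ : ℝ) (hγ : 1 < γ) (hB : 0 < B) (hS : 0 < S) (hε : 0 < ε)
    (h1 : (2 * B / ((γ + 1) * S)) ^ (1 / (γ - 1)) < ρ)
    (h2 : ρ ≤ (B / S) ^ (1 / (γ - 1)))
    (h3 : 2 * ρ ^ 2 * (B - ρ ^ (γ - 1) * S) ≤
      (γ - 1) * (2 * B / (γ + 1)) ^ ((γ + 1) / (γ - 1)) * S ^ (-2 / (γ - 1)) - ε / 2) :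
    2 * ρ * (2 * B - (γ + 1) * ρ ^ (γ - 1) * S) ≤ -ε / ρ := by
  have hγ_neg : -1 < γ := by linarith
  have hρ : 0 < ρ := (criticalDensity_pos hγ_neg hB hS).trans h1
  rw [← squaredMomentum_criticalDensity_eq_rpow_mul_rpow hγ_neg hγ.ne' hB hS] at h3
  rw [← (hasDerivAt_squaredMomentum γ B S hρ.ne').deriv]
  exact stmt_6_general hγ hB hS h1.le h3
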